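/- Let 0 ≤ b < 1/2, 0 ≤ b' < 1/2, A > 0, and a ≥ 0. Let K_a : ℝ² → ℂ be measurable and satisfy |K_a(λ,μ)| ≤ (A/⟨a+iμ⟩) · min( 1/⟨λ⟩ + 1/⟨λ−μ⟩ , ⟨a⟩/⟨λ⟩² + ⟨a⟩/⟨λ−μ⟩² ) for all (λ,μ) ∈ ℝ². Then there is a constant C = C(b,b') > 0, independent of a and A, such that for every measurable g : ℝ → ℂ with ‖⟨μ⟩^{−b'} g(μ)‖_{L²_μ} < ∞, one has ‖⟨λ⟩^{b} ∫_ℝ K_a(λ,μ) g(μ) dμ‖_{L²_λ} ≤ C · A · ⟨a⟩^{b'−1/2} · ‖⟨μ⟩^{−b'} g(μ)‖_{L²_μ}. -/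

import Mathlib

/-!
Write `w = ⟨a+iμ⟩`, `α = ⟨a⟩` and `G(μ) = ⟨μ⟩^{-b'} |g(μ)|`. Splitting according to which of `⟨λ⟩`
and `⟨λ-μ⟩` is smaller, and using `⟨λ⟩^b ≤ ⟨μ⟩^b + ⟨λ-μ⟩^b`, the kernel acting on `G` is at most
`2A` times (`weighted_kernel_le`)
`⟨λ⟩^{b-1} w^{b'-1} + ⟨λ-μ⟩^{b-1} w^{b'-1} + α^{b'-1/2} ⟨λ-μ⟩^{b-3/2}`.
The exponent `b - 3/2 < -1` in the last term comes from interpolating between `1/⟨x⟩` and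
`α/⟨x⟩²`, which costs `α^{1/2-b}`; this is paid for by `⟨μ⟩^{b+b'}/w ≤ α^{b+b'-1}`.

* The first kernel has rank one, with `⟨λ⟩^{b-1} ∈ L²` because `b < 1/2`, and
  `‖w^{b'-1}‖_{L²} ~ α^{b'-1/2}` by scaling (`lintegral_jbC_rpow`).
* The second is controlled by Young's inequality `L² * L¹ → L²` (`lintegral_conv_sq_le`), since
  `‖w^{b'-1} G‖_{L¹} ≤ ‖w^{b'-1}‖_{L²} ‖G‖_{L²}`.
* The third is controlled by Young's inequality `L¹ * L² → L²` (`lintegral_conv_sq_le'`).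

All integrals are lower Lebesgue integrals of nonnegative functions, so no integrability of
`μ ↦ K(λ,μ) g(μ)` has to be established.
-/

noncomputable section

open MeasureTheory
open scoped ENNReal

/-- Japanese bracket of a real number: `⟨x⟩ = (1 + x²)^{1/2}`. -/
def jb (x : ℝ) : ℝ := Real.sqrt (1 + x ^ 2)

/-- `⟨a + iμ⟩ = (1 + a² + μ²)^{1/2}`. -/
def jbC (a μ : ℝ) : ℝ := Real.sqrt (1 + a ^ 2 + μ ^ 2)

/-- The kernel bound hypothesis of Lemma 3.5:
`|K_a(λ,μ)| ≤ (A/⟨a+iμ⟩) min( ⟨λ⟩⁻¹ + ⟨λ-μ⟩⁻¹ , ⟨a⟩⟨λ⟩⁻² + ⟨a⟩⟨λ-μ⟩⁻² )`. -/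
def KernelBound (A a : ℝ) (K : ℝ → ℝ → ℂ) : Prop :=
  ∀ l μ : ℝ, ‖K l μ‖ ≤ A / jbC a μ *
    min (1 / jb l + 1 / jb (l - μ)) (jb a / jb l ^ 2 + jb a / jb (l - μ) ^ 2)

/-- Cauchy–Schwarz for the lower Lebesgue integral, in squared form. -/
lemma lintegral_mul_sq_le {f h : ℝ → ℝ≥0∞} (hf : Measurable f) (hh : Measurable h) :
    (∫⁻ x, f x * h x) ^ 2 ≤ (∫⁻ x, f x ^ 2) * ∫⁻ x, h x ^ 2 := by
  have h1 := ENNReal.lintegral_mul_le_Lp_mul_Lq volume Real.HolderConjugate.two_two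
    hf.aemeasurable hh.aemeasurable
  simp only [Pi.mul_apply, ENNReal.rpow_ofNat] at h1
  have h2 : ∀ x : ℝ≥0∞, (x ^ ((1 : ℝ) / 2)) ^ 2 = x := fun x => by
    rw [← ENNReal.rpow_natCast, ← ENNReal.rpow_mul]; norm_num
  calc _ ≤ _ := pow_le_pow_left₀ (zero_le) h1 2
    _ = _ := by rw [mul_pow, h2, h2]

/-- Cauchy–Schwarz with respect to the weight `h`. -/
lemma lintegral_mul_sq_le_weight {k h : ℝ → ℝ≥0∞} (hk : Measurable k) (hh : Measurable h) :
    (∫⁻ x, k x * h x) ^ 2 ≤ (∫⁻ x, k x ^ 2 * h x) * ∫⁻ x, h x := by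
  have h2 : ∀ x : ℝ≥0∞, (x ^ ((1 : ℝ) / 2)) ^ 2 = x := fun x => by
    rw [← ENNReal.rpow_natCast, ← ENNReal.rpow_mul]; norm_num
  have hm : Measurable fun x => h x ^ ((1 : ℝ) / 2) := hh.pow_const _
  have := lintegral_mul_sq_le (hk.mul hm) hm
  simp only [Pi.mul_apply, mul_assoc, mul_pow, h2] at this
  simpa only [← pow_two, h2] using this

/-- The convolution bound `L² * L¹ → L²`. -/
lemma lintegral_conv_sq_le {k h : ℝ → ℝ≥0∞} (hk : Measurable k) (hh : Measurable h) :
    ∫⁻ l, (∫⁻ x, k (l - x) * h x) ^ 2 ≤ (∫⁻ x, k x ^ 2) * (∫⁻ x, h x) ^ 2 := by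
  calc ∫⁻ l, (∫⁻ x, k (l - x) * h x) ^ 2
      ≤ ∫⁻ l, (∫⁻ x, k (l - x) ^ 2 * h x) * ∫⁻ x, h x := by
        refine lintegral_mono fun l => ?_
        exact lintegral_mul_sq_le_weight (k := fun x => k (l - x)) (by fun_prop) hh
    _ = (∫⁻ l, ∫⁻ x, k (l - x) ^ 2 * h x) * ∫⁻ x, h x :=
        lintegral_mul_const _ (Measurable.lintegral_prod_right' (f := fun p : ℝ × ℝ =>
          k (p.1 - p.2) ^ 2 * h p.2) (by fun_prop))
    _ = (∫⁻ x, ∫⁻ l, k (l - x) ^ 2 * h x) * ∫⁻ x, h x := by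
        rw [lintegral_lintegral_swap]
        exact Measurable.aemeasurable (by unfold Function.uncurry; fun_prop)
    _ = _ := by
        have : ∀ x, ∫⁻ l, k (l - x) ^ 2 * h x = (∫⁻ l, k l ^ 2) * h x := fun x => by
          rw [lintegral_mul_const _ (by fun_prop),
            lintegral_sub_right_eq_self (fun l => k l ^ 2) x]
        simp_rw [this]
        rw [lintegral_const_mul _ hh, pow_two, mul_assoc]

/-- The convolution bound `L¹ * L² → L²`. -/
lemma lintegral_conv_sq_le' {k h : ℝ → ℝ≥0∞} (hk : Measurable k) (hh : Measurable h) :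
    ∫⁻ l, (∫⁻ x, k (l - x) * h x) ^ 2 ≤ (∫⁻ x, k x) ^ 2 * ∫⁻ x, h x ^ 2 := by
  calc ∫⁻ l, (∫⁻ x, k (l - x) * h x) ^ 2
      = ∫⁻ l, (∫⁻ y, h (l - y) * k y) ^ 2 := by
        refine lintegral_congr fun l => ?_
        rw [← lintegral_sub_left_eq_self (fun y => h (l - y) * k y) l]
        simp [mul_comm]
    _ ≤ _ := lintegral_conv_sq_le hh hk
    _ = _ := mul_comm _ _

lemma add_three_sq_le (x y z : ℝ≥0∞) : (x + y + z) ^ 2 ≤ 3 * (x ^ 2 + y ^ 2 + z ^ 2) := by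
  by_cases hx : x = ⊤
  · simp [hx]
  by_cases hy : y = ⊤
  · simp [hy]
  by_cases hz : z = ⊤
  · simp [hz]
  lift x to NNReal using hx
  lift y to NNReal using hy
  lift z to NNReal using hz
  norm_cast
  rw [← NNReal.coe_le_coe]
  push_cast
  nlinarith [sq_nonneg (x - y : ℝ), sq_nonneg (x - z : ℝ), sq_nonneg (y - z : ℝ)]

lemma one_le_jb (x : ℝ) : 1 ≤ jb x := by
  unfold jb; exact Real.one_le_sqrt.2 (by nlinarith)

lemma jb_pos (x : ℝ) : 0 < jb x := lt_of_lt_of_le one_pos (one_le_jb x)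

lemma jb_sq (x : ℝ) : jb x ^ 2 = 1 + x ^ 2 := Real.sq_sqrt (by positivity)

lemma jb_le_jbC_left (a μ : ℝ) : jb a ≤ jbC a μ := Real.sqrt_le_sqrt (by nlinarith)

lemma jb_le_jbC_right (a μ : ℝ) : jb μ ≤ jbC a μ := Real.sqrt_le_sqrt (by nlinarith)

lemma jbC_pos (a μ : ℝ) : 0 < jbC a μ := (jb_pos a).trans_le (jb_le_jbC_left a μ)

lemma jb_le_add (l μ : ℝ) : jb l ≤ jb μ + jb (l - μ) := by
  refine Real.sqrt_le_iff.2 ⟨by linarith [jb_pos μ, jb_pos (l - μ)], ?_⟩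
  have h1 : |μ| ≤ jb μ := Real.abs_le_sqrt (by linarith)
  have h2 : |l - μ| ≤ jb (l - μ) := Real.abs_le_sqrt (by linarith)
  have h3 : |μ| * |l - μ| ≤ jb μ * jb (l - μ) :=
    mul_le_mul h1 h2 (abs_nonneg _) (jb_pos μ).le
  have h4 : μ * (l - μ) ≤ |μ| * |l - μ| := by rw [← abs_mul]; exact le_abs_self _
  nlinarith [jb_sq μ, jb_sq (l - μ)]

lemma jbC_eq (a μ : ℝ) : jbC a μ = jb a * jb (μ / jb a) := by
  have := jb_pos a
  unfold jbC
  rw [jb.eq_1 (μ / jb a), ← Real.sqrt_sq this.le, ← Real.sqrt_mul (by positivity), Real.sqrt_sq this.le]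
  congr 1
  rw [mul_add, div_pow, mul_div_cancel₀ _ (by positivity), jb_sq]
  ring

@[fun_prop]
lemma continuous_jb : Continuous jb := by unfold jb; fun_prop

@[fun_prop]
lemma measurable_jb : Measurable jb := continuous_jb.measurable

lemma integrable_jb_rpow {s : ℝ} (hs : s < -1) : Integrable fun x => jb x ^ s := by
  have := integrable_rpow_neg_one_add_norm_sq (E := ℝ) (μ := volume) (r := -s) (by simp; linarith)
  refine this.congr (.of_forall fun x => ?_)
  simp only [jb, Real.norm_eq_abs, sq_abs, neg_neg]
  rw [Real.sqrt_eq_rpow, ← Real.rpow_mul (by positivity)]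
  ring_nf

lemma lintegral_jb_rpow {s : ℝ} (hs : s < -1) :
    ∫⁻ x, ENNReal.ofReal (jb x ^ s) = ENNReal.ofReal (∫ x, jb x ^ s) :=
  (ofReal_integral_eq_lintegral_ofReal (integrable_jb_rpow hs)
    (.of_forall fun x => Real.rpow_nonneg (jb_pos x).le _)).symm

/-- Scaling `μ = ⟨a⟩ t` extracts the power `⟨a⟩^{s+1}` from `∫ ⟨a+iμ⟩^s dμ`. -/
lemma lintegral_jbC_rpow {s : ℝ} (hs : s < -1) (a : ℝ) :
    ∫⁻ x, ENNReal.ofReal (jbC a x ^ s) = ENNReal.ofReal (jb a ^ (s + 1) * ∫ x, jb x ^ s) := by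
  have ha := jb_pos a
  have e : ∀ x, jbC a x ^ s = jb a ^ s * jb (x / jb a) ^ s := fun x => by
    rw [jbC_eq, Real.mul_rpow ha.le (jb_pos _).le]
  simp_rw [e]
  rw [← ofReal_integral_eq_lintegral_ofReal, integral_const_mul,
    Measure.integral_comp_div (fun x => jb x ^ s), Real.rpow_add ha, Real.rpow_one, abs_of_pos ha,
    smul_eq_mul, mul_assoc]
  · exact ((integrable_jb_rpow hs).comp_div ha.ne').const_mul _
  · exact .of_forall fun x => mul_nonneg (Real.rpow_nonneg ha.le _) (Real.rpow_nonneg (jb_pos _).le _)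

/-- Pointwise domination of the weighted kernel by a rank-one kernel and two convolution kernels. -/
lemma weighted_kernel_le {b b' : ℝ} (hb0 : 0 ≤ b) (hb : b < 1 / 2)
    (hb'0 : 0 ≤ b') (hb' : b' < 1 / 2) {A a : ℝ} (hA : 0 < A) (l μ : ℝ) :
    jb l ^ b * (A / jbC a μ *
      min (1 / jb l + 1 / jb (l - μ)) (jb a / jb l ^ 2 + jb a / jb (l - μ) ^ 2)) ≤
    2 * A * (jb l ^ (b - 1) * jbC a μ ^ (b' - 1) + jb (l - μ) ^ (b - 1) * jbC a μ ^ (b' - 1)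
      + jb a ^ (b' - 1 / 2) * jb (l - μ) ^ (b - 3 / 2)) * jb μ ^ (-b') := by
  have hx := jb_pos l
  have hy := jb_pos (l - μ)
  have hα := jb_pos a
  have hw := jbC_pos a μ
  have hm := jb_pos μ
  have hαw := jb_le_jbC_left a μ
  have hmw := jb_le_jbC_right a μ
  have htri := jb_le_add l μ
  set x := jb l
  set y := jb (l - μ)
  set α := jb a
  set w := jbC a μ
  set m := jb μ
  -- `1/w ≤ w^{b'-1} m^{-b'}`
  have hw1 : 1 / w ≤ w ^ (b' - 1) * m ^ (-b') := by
    rw [Real.rpow_sub_one hw.ne', Real.rpow_neg hm.le, ← div_eq_mul_inv, div_div, mul_comm w,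
      ← div_div]
    gcongr
    rw [le_div_iff₀ (by positivity), one_mul]
    gcongr
  have key : ∀ z : ℝ, 0 < z → z ^ b * (A / w * (2 / z)) ≤
      2 * A * (z ^ (b - 1) * w ^ (b' - 1)) * m ^ (-b') := by
    intro z hz
    have : z ^ b * (A / w * (2 / z)) = 2 * A * (z ^ (b - 1)) * (1 / w) := by
      rw [Real.rpow_sub_one hz.ne']; field_simp
    rw [this]
    calc _ ≤ 2 * A * (z ^ (b - 1)) * (w ^ (b' - 1) * m ^ (-b')) := by gcongr
      _ = _ := by ring
  rcases le_total x y with hxy | hxy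
  · have h1 : min (1 / x + 1 / y) (α / x ^ 2 + α / y ^ 2) ≤ 2 / x := by
      refine (min_le_left _ _).trans ?_
      have : 1 / y ≤ 1 / x := by gcongr
      calc _ ≤ 1 / x + 1 / x := by gcongr
        _ = _ := by ring
    calc _ ≤ x ^ b * (A / w * (2 / x)) := by gcongr
      _ ≤ _ := key x hx
      _ ≤ _ := by
        gcongr
        have h1 : 0 ≤ y ^ (b - 1) * w ^ (b' - 1) := by positivity
        have h2 : 0 ≤ α ^ (b' - 1 / 2) * y ^ (b - 3 / 2) := by positivity
        linarith
  · set M := min (1 / x + 1 / y) (α / x ^ 2 + α / y ^ 2)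
    have h1 : M ≤ 2 / y := by
      refine (min_le_left _ _).trans ?_
      have : 1 / x ≤ 1 / y := by gcongr
      calc _ ≤ 1 / y + 1 / y := by gcongr
        _ = _ := by ring
    have h2 : M ≤ 2 * α / y ^ 2 := by
      refine (min_le_right _ _).trans ?_
      have : α / x ^ 2 ≤ α / y ^ 2 := by gcongr
      calc _ ≤ α / y ^ 2 + α / y ^ 2 := by gcongr
        _ = _ := by ring
    have hM0 : 0 ≤ M := by positivity
    -- interpolation between the two bounds on `M`
    have h3 : M ≤ 2 * (α ^ (1 / 2 - b) * y ^ (b - 3 / 2)) := by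
      rcases le_total y α with h | h
      · refine h1.trans ?_
        calc 2 / y = 2 * (y ^ (1 / 2 - b) * y ^ (b - 3 / 2)) := by
              rw [← Real.rpow_add hy]
              norm_num [Real.rpow_neg_one, div_eq_mul_inv]
          _ ≤ _ := by
              have : y ^ (1 / 2 - b) ≤ α ^ (1 / 2 - b) :=
                Real.rpow_le_rpow hy.le h (by linarith)
              gcongr
      · refine h2.trans ?_
        calc 2 * α / y ^ 2 = 2 * (α ^ (1 / 2 - b) * (α ^ (1 / 2 + b) * y ^ (-2 : ℝ))) := by
              rw [← mul_assoc (α ^ (1 / 2 - b)), ← Real.rpow_add hα, Real.rpow_neg hy.le]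
              norm_num [div_eq_mul_inv, mul_assoc]
          _ ≤ 2 * (α ^ (1 / 2 - b) * (y ^ (1 / 2 + b) * y ^ (-2 : ℝ))) := by
              gcongr
          _ = _ := by
              rw [← Real.rpow_add hy]; ring_nf
    have h4 : x ^ b ≤ m ^ b + y ^ b :=
      (Real.rpow_le_rpow hx.le htri hb0).trans
        (Real.rpow_add_le_add_rpow hm.le hy.le hb0 (by linarith))
    have h5 : m ^ b * (1 / w) ≤ α ^ (b + b' - 1) * m ^ (-b') := by
      calc m ^ b * (1 / w) = (m ^ (b + b') * (1 / w)) * m ^ (-b') := by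
            rw [mul_right_comm, ← Real.rpow_add hm]; ring_nf
        _ ≤ (w ^ (b + b') * (1 / w)) * m ^ (-b') := by gcongr
        _ = w ^ (b + b' - 1) * m ^ (-b') := by
            rw [Real.rpow_sub_one hw.ne']; ring
        _ ≤ _ := by
            gcongr ?_ * _
            exact Real.rpow_le_rpow_of_nonpos hα hαw (by linarith)
    have h6 : m ^ b * (A / w * M) ≤ 2 * A * (α ^ (b' - 1 / 2) * y ^ (b - 3 / 2)) * m ^ (-b') := by
      calc m ^ b * (A / w * M) = A * (m ^ b * (1 / w)) * M := by ring
        _ ≤ A * (α ^ (b + b' - 1) * m ^ (-b')) * (2 * (α ^ (1 / 2 - b) * y ^ (b - 3 / 2))) := by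
            gcongr
        _ = 2 * A * ((α ^ (b + b' - 1) * α ^ (1 / 2 - b)) * y ^ (b - 3 / 2)) * m ^ (-b') := by ring
        _ = _ := by rw [← Real.rpow_add hα]; ring_nf
    have h7 : y ^ b * (A / w * M) ≤ 2 * A * (y ^ (b - 1) * w ^ (b' - 1)) * m ^ (-b') :=
      le_trans (by gcongr) (key y hy)
    have h8 : 0 ≤ 2 * A * (x ^ (b - 1) * w ^ (b' - 1)) * m ^ (-b') := by positivity
    calc _ ≤ (m ^ b + y ^ b) * (A / w * M) := by gcongr
      _ = m ^ b * (A / w * M) + y ^ b * (A / w * M) := by ring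
      _ ≤ _ := by linarith

/-- Lemma 3.5 (i): under the kernel bound, `T_a` maps `H^{-b'}(ℝ)` to `H^{b}(ℝ)` with
operator norm `≲ A ⟨a⟩^{b'-1/2}`, for `0 ≤ b, b' < 1/2`, uniformly in `a ≥ 0` and `A`. -/
theorem kernel_bound_i (b b' : ℝ) (hb0 : 0 ≤ b) (hb : b < 1 / 2)
    (hb'0 : 0 ≤ b') (hb' : b' < 1 / 2) :
    ∃ C > (0 : ℝ), ∀ A : ℝ, 0 < A → ∀ a : ℝ, 0 ≤ a →
      ∀ K : ℝ → ℝ → ℂ, Measurable (Function.uncurry K) → KernelBound A a K →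
      ∀ g : ℝ → ℂ, Measurable g →
        (∫⁻ μ : ℝ, ENNReal.ofReal ((jb μ ^ (-b') * ‖g μ‖) ^ 2)) < ⊤ →
        (∫⁻ l : ℝ, ENNReal.ofReal ((jb l ^ b * ‖∫ μ : ℝ, K l μ * g μ‖) ^ 2)) ^ ((1 : ℝ) / 2)
          ≤ ENNReal.ofReal (C * A * jb a ^ (b' - 1 / 2)) *
            (∫⁻ μ : ℝ, ENNReal.ofReal ((jb μ ^ (-b') * ‖g μ‖) ^ 2)) ^ ((1 : ℝ) / 2) := by
  have hI : ∀ s : ℝ, 0 ≤ ∫ x, jb x ^ s := fun s =>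
    integral_nonneg fun x => Real.rpow_nonneg (jb_pos x).le _
  set I₁ := ∫ x, jb x ^ (2 * b - 2)
  set I₂ := ∫ x, jb x ^ (b - 3 / 2)
  set Ip := ∫ x, jb x ^ (2 * b' - 2)
  have hI₁ : 0 ≤ I₁ := hI _
  have hI₂ : 0 ≤ I₂ := hI _
  have hIp : 0 ≤ Ip := hI _
  -- for `C = D + 1` one has `D ≤ C²`, so no square root is needed in the constant
  refine ⟨12 * (2 * (I₁ * Ip) + I₂ ^ 2) + 1, by positivity, ?_⟩
  intro A hA a _ K _ hK g hg _
  set G : ℝ → ℝ≥0∞ := fun μ => ENNReal.ofReal (jb μ ^ (-b') * ‖g μ‖) with hG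
  have hGm : Measurable G := by unfold G; fun_prop
  set P : ℝ → ℝ≥0∞ := fun μ => ENNReal.ofReal (jbC a μ ^ (b' - 1)) with hP
  have hPm : Measurable P := by unfold P jbC; fun_prop
  set k₁ : ℝ → ℝ≥0∞ := fun x => ENNReal.ofReal (jb x ^ (b - 1)) with hk₁
  have hk₁m : Measurable k₁ := by unfold k₁; fun_prop
  set k₂ : ℝ → ℝ≥0∞ := fun x => ENNReal.ofReal (jb x ^ (b - 3 / 2)) with hk₂
  have hk₂m : Measurable k₂ := by unfold k₂; fun_prop
  set c : ℝ≥0∞ := ENNReal.ofReal (jb a ^ (b' - 1 / 2)) with hc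
  have hα := jb_pos a
  have hS : (∫⁻ μ : ℝ, ENNReal.ofReal ((jb μ ^ (-b') * ‖g μ‖) ^ 2)) = ∫⁻ μ, G μ ^ 2 :=
    lintegral_congr fun μ => ENNReal.ofReal_pow
      (mul_nonneg (Real.rpow_nonneg (jb_pos μ).le _) (norm_nonneg _)) 2
  rw [hS]
  set S := ∫⁻ μ, G μ ^ 2
  set N := ∫⁻ μ, P μ * G μ
  have hk₁i : ∫⁻ x, k₁ x ^ 2 = ENNReal.ofReal I₁ := by
    rw [← lintegral_jb_rpow (by linarith)]
    refine lintegral_congr fun x => ?_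
    rw [hk₁, ← ENNReal.ofReal_pow (Real.rpow_nonneg (jb_pos x).le _), ← Real.rpow_mul_natCast
      (jb_pos x).le]
    ring_nf
  have hPi : ∫⁻ x, P x ^ 2 = c ^ 2 * ENNReal.ofReal Ip := by
    have h : c ^ 2 = ENNReal.ofReal (jb a ^ (2 * b' - 2 + 1)) := by
      rw [hc, ← ENNReal.ofReal_pow (Real.rpow_nonneg hα.le _), ← Real.rpow_mul_natCast hα.le]
      ring_nf
    rw [h, ← ENNReal.ofReal_mul (Real.rpow_nonneg hα.le _), ← lintegral_jbC_rpow (by linarith)]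
    refine lintegral_congr fun x => ?_
    rw [hP, ← ENNReal.ofReal_pow (Real.rpow_nonneg (jbC_pos a x).le _), ← Real.rpow_mul_natCast
      (jbC_pos a x).le]
    ring_nf
  have hk₂i : ∫⁻ x, k₂ x = ENNReal.ofReal I₂ := lintegral_jb_rpow (by linarith)
  have hN : N ^ 2 ≤ c ^ 2 * ENNReal.ofReal Ip * S := hPi ▸ lintegral_mul_sq_le hPm hGm
  have hpt : ∀ l, ENNReal.ofReal ((jb l ^ b * ‖∫ μ : ℝ, K l μ * g μ‖) ^ 2) ≤
      (ENNReal.ofReal (2 * A)) ^ 2 * (3 * ((k₁ l * N) ^ 2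
        + (∫⁻ μ, k₁ (l - μ) * (P μ * G μ)) ^ 2 + (c * ∫⁻ μ, k₂ (l - μ) * G μ) ^ 2)) := by
    intro l
    have hl := Real.rpow_nonneg (jb_pos l).le b
    rw [ENNReal.ofReal_pow (mul_nonneg hl (norm_nonneg _))]
    have h1 : ENNReal.ofReal (jb l ^ b * ‖∫ μ : ℝ, K l μ * g μ‖) ≤
        ENNReal.ofReal (2 * A) * (k₁ l * N + (∫⁻ μ, k₁ (l - μ) * (P μ * G μ))
          + c * ∫⁻ μ, k₂ (l - μ) * G μ) := by
      calc _ = ENNReal.ofReal (jb l ^ b) * ‖∫ μ : ℝ, K l μ * g μ‖ₑ := by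
            rw [ENNReal.ofReal_mul hl, ofReal_norm]
        _ ≤ ENNReal.ofReal (jb l ^ b) * ∫⁻ μ, ‖K l μ * g μ‖ₑ := by
            gcongr; exact enorm_integral_le_lintegral_enorm _
        _ = ∫⁻ μ, ENNReal.ofReal (jb l ^ b) * ‖K l μ * g μ‖ₑ :=
            (lintegral_const_mul' _ _ ENNReal.ofReal_ne_top).symm
        _ ≤ ∫⁻ μ, ENNReal.ofReal (2 * A) * (k₁ l * (P μ * G μ) + k₁ (l - μ) * (P μ * G μ)
              + c * (k₂ (l - μ) * G μ)) := by
            refine lintegral_mono fun μ => ?_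
            have p1 := Real.rpow_nonneg (jb_pos l).le (b - 1)
            have p2 := Real.rpow_nonneg (jb_pos (l - μ)).le (b - 1)
            have p3 := Real.rpow_nonneg (jb_pos (l - μ)).le (b - 3 / 2)
            have p4 := Real.rpow_nonneg (jbC_pos a μ).le (b' - 1)
            have p5 := Real.rpow_nonneg hα.le (b' - 1 / 2)
            have p6 := Real.rpow_nonneg (jb_pos μ).le (-b')
            have p7 := norm_nonneg (g μ)
            simp only [hk₁, hP, hG, hk₂, hc]
            rw [← ofReal_norm, ← ENNReal.ofReal_mul hl, ← ENNReal.ofReal_mul p4,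
              ← ENNReal.ofReal_mul p1, ← ENNReal.ofReal_mul p2, ← ENNReal.ofReal_mul p3,
              ← ENNReal.ofReal_mul p5, ← ENNReal.ofReal_add (by positivity) (by positivity),
              ← ENNReal.ofReal_add (by positivity) (by positivity),
              ← ENNReal.ofReal_mul (by positivity)]
            refine ENNReal.ofReal_le_ofReal ?_
            rw [norm_mul, ← mul_assoc]
            calc _ ≤ _ := mul_le_mul_of_nonneg_right ((mul_le_mul_of_nonneg_left (hK l μ) hl).trans
                    (weighted_kernel_le hb0 hb hb'0 hb' hA l μ)) p7
              _ = _ := by ring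
        _ = _ := by
            rw [lintegral_const_mul _ (by fun_prop), lintegral_add_left (by fun_prop),
              lintegral_add_left (by fun_prop), lintegral_const_mul _ (by fun_prop),
              lintegral_const_mul _ (by fun_prop)]
    calc _ ≤ _ := pow_le_pow_left₀ zero_le h1 2
      _ ≤ _ := by
        rw [mul_pow]
        gcongr
        exact add_three_sq_le _ _ _
  have hmeas : ∀ k h : ℝ → ℝ≥0∞, Measurable k → Measurable h →
      Measurable fun l => ∫⁻ μ, k (l - μ) * h μ := fun k h hk hh =>
    Measurable.lintegral_prod_right' (f := fun p : ℝ × ℝ => k (p.1 - p.2) * h p.2) (by fun_prop)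
  have hm1 := hmeas k₁ (fun μ => P μ * G μ) hk₁m (by fun_prop)
  have hm2 := hmeas k₂ G hk₂m hGm
  have hmain : ∫⁻ l : ℝ, ENNReal.ofReal ((jb l ^ b * ‖∫ μ : ℝ, K l μ * g μ‖) ^ 2) ≤
      ENNReal.ofReal ((12 * (2 * (I₁ * Ip) + I₂ ^ 2) + 1) * A * jb a ^ (b' - 1 / 2)) ^ 2 * S := by
    calc _ ≤ _ := lintegral_mono hpt
      _ = (ENNReal.ofReal (2 * A)) ^ 2 * (3 * ((∫⁻ l, k₁ l ^ 2) * N ^ 2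
          + (∫⁻ l, (∫⁻ μ, k₁ (l - μ) * (P μ * G μ)) ^ 2)
          + c ^ 2 * ∫⁻ l, (∫⁻ μ, k₂ (l - μ) * G μ) ^ 2)) := by
        simp_rw [mul_pow]
        rw [lintegral_const_mul _ (by fun_prop), lintegral_const_mul _ (by fun_prop),
          lintegral_add_left (by fun_prop), lintegral_add_left (by fun_prop),
          lintegral_mul_const _ (by fun_prop), lintegral_const_mul _ (by fun_prop)]
      _ ≤ (ENNReal.ofReal (2 * A)) ^ 2 * (3 * ((∫⁻ l, k₁ l ^ 2) * N ^ 2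
          + (∫⁻ l, k₁ l ^ 2) * N ^ 2
          + c ^ 2 * ((∫⁻ l, k₂ l) ^ 2 * S))) := by
        gcongr
        · exact lintegral_conv_sq_le (h := fun μ => P μ * G μ) hk₁m (by fun_prop)
        · exact lintegral_conv_sq_le' hk₂m hGm
      _ ≤ (ENNReal.ofReal (2 * A)) ^ 2 * (3 * (ENNReal.ofReal I₁ * (c ^ 2 * ENNReal.ofReal Ip * S)
          + ENNReal.ofReal I₁ * (c ^ 2 * ENNReal.ofReal Ip * S)
          + c ^ 2 * (ENNReal.ofReal I₂ ^ 2 * S))) := by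
        rw [hk₁i, hk₂i]
        gcongr
      _ = ENNReal.ofReal (12 * (2 * (I₁ * Ip) + I₂ ^ 2)) * (ENNReal.ofReal A ^ 2 * c ^ 2) * S := by
        rw [ENNReal.ofReal_mul (by positivity), ENNReal.ofReal_mul (by positivity),
          ENNReal.ofReal_add (by positivity) (by positivity), ENNReal.ofReal_mul (by positivity),
          ENNReal.ofReal_mul (by positivity), ENNReal.ofReal_pow (by positivity)]
        norm_num
        ring
      _ ≤ _ := by
        have hD : 0 ≤ 12 * (2 * (I₁ * Ip) + I₂ ^ 2) + 1 := by positivity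
        rw [mul_assoc _ A, ENNReal.ofReal_mul hD, ENNReal.ofReal_mul hA.le, mul_pow,
          mul_pow]
        gcongr
        rw [← ENNReal.ofReal_pow (by positivity)]
        refine ENNReal.ofReal_le_ofReal ?_
        have : 0 ≤ 12 * (2 * (I₁ * Ip) + I₂ ^ 2) := by positivity
        nlinarith
  calc _ ≤ _ := ENNReal.rpow_le_rpow hmain (by norm_num)
    _ = _ := by
      rw [ENNReal.mul_rpow_of_nonneg _ _ (by norm_num), ← ENNReal.rpow_natCast,
        ← ENNReal.rpow_mul]
      norm_num
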